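/- arXiv:1804.00221 — 2 statements merged into one kernel-verified Lean document; each statement's English description precedes it below -/
import Mathlib

section
/- Let b ≥ 5 be a squarefree integer and a a positive rational that is not an integral power of b; write a = (r/s)·b^k with k ∈ Z, r, s coprime positive integers, 1 < r/s < b. Then the block complexity of the leading digit sequence of a^n in base b satisfies p_{a,b}(n) = c·n + d for all n ≥ 1, where c = b − 1 − ⌊(b−1)/r⌋ − ⌊(gcd(b,r)−1)/s⌋ and d = b − 1 − c. -/
/-- The leading digit of `x` in base `b`: the unique `d ∈ {1,…,b-1}` with
`d · b^k ≤ x < (d+1) · b^k` for some integer `k` (here `k = ⌊log_b x⌋`). -/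
noncomputable def leadingDigit (b : ℕ) (x : ℝ) : ℕ :=
  (⌊x / (b : ℝ) ^ (⌊Real.logb b x⌋ : ℤ)⌋).toNat

/-- The block complexity of the leading digit sequence of `a^n` in base `b`:
the number of distinct blocks of length `n`. -/
noncomputable def blockComplexity (a : ℝ) (b : ℕ) (n : ℕ) : ℕ :=
  Set.ncard {w : Fin n → ℕ |
    ∃ m : ℕ, 1 ≤ m ∧ ∀ i : Fin n, w i = leadingDigit b (a ^ (m + (i : ℕ)))}

/-! Multiplying by a power of `b` does not change leading digits, so everything happens on the
multiplicative circle of positive reals modulo `b ^ ℤ`, represented here by mantissas in `[1, b)`.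
Writing `a = q * b ^ k` with `q = r / s`, the block starting at time `m` is determined by the
position of `q ^ m` on the circle, and it changes exactly at the cut points `d / q ^ i` with
`1 ≤ d < b` and `i < n`. Because `b ≥ 4`, two arcs starting at different cut points carry different
blocks, and because `log_b q` is irrational, the orbit of `q` visits every arc. Hence `p(n)` is
the number of distinct cut points. At level `0` there are `b - 1` of them. For squarefree `b`, the
cut point `d / q ^ i` of a level `i ≥ 1` has already occurred at a lower level exactly if `r ∣ d`,
or `r / gcd(b, r) ∣ d` and `d * s < r`; this does not depend on `i`, so every further level
contributes the same number of new cut points. -/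

section Mantissa

variable {b : ℕ} {x y : ℝ}

/-- The mantissa of `x > 0` in base `b`: the representative in `[1, b)` of the class of `x` modulo
integral powers of `b`. -/
noncomputable def mantissa (b : ℕ) (x : ℝ) : ℝ :=
  x / (b : ℝ) ^ Int.log b x

theorem mantissa_mul_zpow_log (hb : b ≠ 0) (x : ℝ) :
    mantissa b x * (b : ℝ) ^ Int.log b x = x :=
  div_mul_cancel₀ x (zpow_ne_zero _ (Nat.cast_ne_zero.2 hb))

theorem mantissa_mem_Ico (hb : 1 < b) (hx : 0 < x) : mantissa b x ∈ Set.Ico 1 (b : ℝ) := by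
  have hb0 : (0 : ℝ) < b := mod_cast zero_lt_one.trans hb
  have hpow : 0 < (b : ℝ) ^ Int.log b x := zpow_pos hb0 _
  rw [mantissa, Set.mem_Ico, one_le_div hpow, div_lt_iff₀' hpow, ← zpow_add_one₀ hb0.ne']
  exact ⟨Int.zpow_log_le_self hb hx, Int.lt_zpow_succ_log_self hb x⟩

theorem mantissa_pos (hb : 1 < b) (hx : 0 < x) : 0 < mantissa b x :=
  zero_lt_one.trans_le (mantissa_mem_Ico hb hx).1

theorem mantissa_mul_zpow_of_mem_Ico (hb : 1 < b) (hx : x ∈ Set.Ico 1 (b : ℝ)) (l : ℤ) :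
    mantissa b (x * (b : ℝ) ^ l) = x := by
  have hb0 : (0 : ℝ) < b := mod_cast zero_lt_one.trans hb
  have hpow : 0 < (b : ℝ) ^ l := zpow_pos hb0 l
  have hpos : 0 < x * (b : ℝ) ^ l := mul_pos (zero_lt_one.trans_le hx.1) hpow
  have hlower : l ≤ Int.log b (x * (b : ℝ) ^ l) :=
    (Int.zpow_le_iff_le_log hb hpos).1 (le_mul_of_one_le_left hpow.le hx.1)
  have hupper : Int.log b (x * (b : ℝ) ^ l) < l + 1 := by
    rw [← Int.lt_zpow_iff_log_lt hb hpos, zpow_add_one₀ hb0.ne', mul_comm]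
    exact mul_lt_mul_of_pos_left hx.2 hpow
  rw [mantissa, show Int.log b (x * (b : ℝ) ^ l) = l by omega, mul_div_cancel_right₀ _ hpow.ne']

theorem mantissa_of_mem_Ico (hb : 1 < b) (hx : x ∈ Set.Ico 1 (b : ℝ)) : mantissa b x = x := by
  simpa using mantissa_mul_zpow_of_mem_Ico hb hx 0

theorem mantissa_mul_zpow (hb : 1 < b) (hx : 0 < x) (l : ℤ) :
    mantissa b (x * (b : ℝ) ^ l) = mantissa b x := by
  have hb0 : (b : ℝ) ≠ 0 := mod_cast (zero_lt_one.trans hb).ne'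
  conv_lhs => rw [← mantissa_mul_zpow_log (zero_lt_one.trans hb).ne' x, mul_assoc, ← zpow_add₀ hb0]
  exact mantissa_mul_zpow_of_mem_Ico hb (mantissa_mem_Ico hb hx) _

theorem mantissa_eq_mantissa_iff (hb : 1 < b) (hy : 0 < y) :
    mantissa b x = mantissa b y ↔ ∃ l : ℤ, x = y * (b : ℝ) ^ l := by
  have hb0 : (b : ℝ) ≠ 0 := mod_cast (zero_lt_one.trans hb).ne'
  refine ⟨fun h => ⟨Int.log b x - Int.log b y, ?_⟩, ?_⟩
  · rw [zpow_sub₀ hb0, mul_div_assoc', mul_div_right_comm, ← mantissa, ← h,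
      mantissa_mul_zpow_log (zero_lt_one.trans hb).ne']
  · rintro ⟨l, rfl⟩
    exact mantissa_mul_zpow hb hy l

theorem natCast_mem_Ico_one {d : ℕ} (hd : d ∈ Finset.Ico 1 b) : (d : ℝ) ∈ Set.Ico 1 (b : ℝ) := by
  simpa using hd

theorem natCast_pos_of_mem_Ico_one {d : ℕ} (hd : d ∈ Finset.Ico 1 b) : (0 : ℝ) < d :=
  zero_lt_one.trans_le (natCast_mem_Ico_one hd).1

theorem mantissa_div_pow_injOn (hb : 1 < b) {q : ℝ} (hq : 0 < q) (i : ℕ) :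
    Set.InjOn (fun d : ℕ => mantissa b (d / q ^ i)) (Finset.Ico 1 b) := by
  intro d hd e he h
  have he0 := natCast_pos_of_mem_Ico_one he
  obtain ⟨l, hl⟩ := (mantissa_eq_mantissa_iff hb (by positivity)).1 h
  have hde : (d : ℝ) = e * (b : ℝ) ^ l := by
    rwa [div_mul_eq_mul_div, div_left_inj' (pow_pos hq i).ne'] at hl
  have hmant := (mantissa_eq_mantissa_iff hb he0).2 ⟨l, hde⟩
  rw [mantissa_of_mem_Ico hb (natCast_mem_Ico_one hd),
    mantissa_of_mem_Ico hb (natCast_mem_Ico_one he)] at hmant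
  exact mod_cast hmant

end Mantissa

section LeadingDigit

variable {b d : ℕ} {x y : ℝ}

theorem leadingDigit_eq_floor_mantissa (hx : 0 ≤ x) : leadingDigit b x = ⌊mantissa b x⌋₊ := by
  rw [leadingDigit, Real.floor_logb_natCast hx, Int.floor_toNat, mantissa]

theorem leadingDigit_mul_zpow (hb : 1 < b) (hx : 0 < x) (l : ℤ) :
    leadingDigit b (x * (b : ℝ) ^ l) = leadingDigit b x := by
  rw [leadingDigit_eq_floor_mantissa (by positivity), leadingDigit_eq_floor_mantissa hx.le,
    mantissa_mul_zpow hb hx]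

theorem leadingDigit_mem_Ico (hb : 1 < b) (hx : 0 < x) : leadingDigit b x ∈ Finset.Ico 1 b := by
  have hmant := mantissa_mem_Ico hb hx
  rw [leadingDigit_eq_floor_mantissa hx.le, Finset.mem_Ico, Nat.one_le_floor_iff,
    Nat.floor_lt (zero_le_one.trans hmant.1)]
  exact hmant

theorem exists_mem_Ico_leadingDigit_mul_zpow (hb : 1 < b) (hx : 0 < x) :
    ∃ l : ℤ, x ∈
      Set.Ico (leadingDigit b x * (b : ℝ) ^ l) ((leadingDigit b x + 1) * (b : ℝ) ^ l) := by
  have hb0 : (0 : ℝ) < b := mod_cast zero_lt_one.trans hb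
  have hpow : 0 < (b : ℝ) ^ Int.log b x := zpow_pos hb0 _
  refine ⟨Int.log b x, ?_⟩
  rw [leadingDigit_eq_floor_mantissa hx.le, Set.mem_Ico, ← le_div_iff₀ hpow, ← div_lt_iff₀ hpow]
  exact ⟨Nat.floor_le (mantissa_pos hb hx).le, Nat.lt_floor_add_one _⟩

theorem leadingDigit_eq_of_mem_Ico (hb : 1 < b) (hd : d ∈ Finset.Ico 1 b) {l : ℤ}
    (hx : x ∈ Set.Ico (d * (b : ℝ) ^ l) ((d + 1) * (b : ℝ) ^ l)) : leadingDigit b x = d := by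
  have hb0 : (0 : ℝ) < b := mod_cast zero_lt_one.trans hb
  have hpow : 0 < (b : ℝ) ^ l := zpow_pos hb0 l
  have hd1 : (1 : ℝ) ≤ d := (natCast_mem_Ico_one hd).1
  have hdb : (d : ℝ) + 1 ≤ b := mod_cast (Finset.mem_Ico.1 hd).2
  have hx0 : 0 < x := (mul_pos (zero_lt_one.trans_le hd1) hpow).trans_le hx.1
  have hquot : d ≤ x / (b : ℝ) ^ l ∧ x / (b : ℝ) ^ l < d + 1 :=
    ⟨(le_div_iff₀ hpow).2 hx.1, (div_lt_iff₀ hpow).2 hx.2⟩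
  have hmant : mantissa b x = x / (b : ℝ) ^ l := by
    have := mantissa_mul_zpow_of_mem_Ico hb ⟨hd1.trans hquot.1, hquot.2.trans_le hdb⟩ l
    rwa [div_mul_cancel₀ _ hpow.ne'] at this
  rwa [leadingDigit_eq_floor_mantissa hx0.le, hmant, Nat.floor_eq_iff (by positivity)]

theorem leadingDigit_natCast_mul_zpow (hb : 1 < b) (hd : d ∈ Finset.Ico 1 b) (l : ℤ) :
    leadingDigit b (d * (b : ℝ) ^ l) = d := by
  have hpow : 0 < (b : ℝ) ^ l := zpow_pos (mod_cast zero_lt_one.trans hb) l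
  exact leadingDigit_eq_of_mem_Ico hb hd ⟨le_rfl, mul_lt_mul_of_pos_right (lt_add_one _) hpow⟩

theorem lt_two_mul_of_leadingDigit_eq (hb : 1 < b) (hx : x ∈ Set.Ico 1 (b : ℝ))
    (hy : y ∈ Set.Ico 1 (b : ℝ)) (h : leadingDigit b x = leadingDigit b y) : y < 2 * x := by
  have hx0 : 0 ≤ x := zero_le_one.trans hx.1
  have hy0 : 0 ≤ y := zero_le_one.trans hy.1
  rw [leadingDigit_eq_floor_mantissa hx0, leadingDigit_eq_floor_mantissa hy0,
    mantissa_of_mem_Ico hb hx, mantissa_of_mem_Ico hb hy] at h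
  have hone : (1 : ℝ) ≤ ⌊x⌋₊ := mod_cast Nat.one_le_floor_iff x |>.2 hx.1
  calc y < ⌊x⌋₊ + 1 := h ▸ Nat.lt_floor_add_one y
    _ ≤ 2 * ⌊x⌋₊ := by linarith
    _ ≤ 2 * x := by linarith [Nat.floor_le hx0]

-- Below `d * b ^ l`, the leading digit `d` last occurs before `(d + 1) * b ^ (l - 1)`, which for
-- `4 ≤ b` is at most half of `d * b ^ l`.
theorem leadingDigit_ne_of_lt_natCast_mul_zpow (hb : 4 ≤ b) (hd : d ∈ Finset.Ico 1 b) {l : ℤ}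
    (hx : 0 < x) (hlt : x < d * (b : ℝ) ^ l) (hlt_two : d * (b : ℝ) ^ l < 2 * x) :
    leadingDigit b x ≠ d := by
  intro h
  have hb1 : 1 < b := by omega
  have hb4 : (4 : ℝ) ≤ b := mod_cast hb
  have hd1 : (1 : ℝ) ≤ d := (natCast_mem_Ico_one hd).1
  obtain ⟨l', hlower, hupper⟩ := exists_mem_Ico_leadingDigit_mul_zpow hb1 hx
  rw [h] at hlower hupper
  have hpow : 0 < (b : ℝ) ^ l' := zpow_pos (by linarith) l'
  have hll : l' < l := by
    have := lt_of_mul_lt_mul_left (hlower.trans_lt hlt) (by linarith)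
    exact (zpow_lt_zpow_iff_right₀ (by linarith)).1 this
  have hgap : d * (4 * (b : ℝ) ^ l') ≤ d * (b : ℝ) ^ l := by
    gcongr
    calc 4 * (b : ℝ) ^ l' ≤ b * (b : ℝ) ^ l' := by gcongr
      _ = (b : ℝ) ^ (l' + 1) := by rw [zpow_add_one₀ (by linarith), mul_comm]
      _ ≤ (b : ℝ) ^ l := zpow_le_zpow_right₀ (by linarith) (by omega)
  nlinarith [hpow]

end LeadingDigit

section DigitWord

variable {b n : ℕ} {q x : ℝ}

/-- The block of the `n` leading digits of `x, x * q, …, x * q ^ (n - 1)` in base `b`. -/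
noncomputable def digitWord (b : ℕ) (q : ℝ) (n : ℕ) (x : ℝ) : Fin n → ℕ :=
  fun i => leadingDigit b (x * q ^ (i : ℕ))

theorem digitWord_mul_zpow (hb : 1 < b) (hq : 0 < q) (hx : 0 < x) (l : ℤ) :
    digitWord b q n (x * (b : ℝ) ^ l) = digitWord b q n x := by
  funext i
  rw [digitWord, mul_right_comm, leadingDigit_mul_zpow hb (by positivity), digitWord]

theorem digitWord_mantissa (hb : 1 < b) (hq : 0 < q) (hx : 0 < x) :
    digitWord b q n (mantissa b x) = digitWord b q n x := by
  obtain ⟨l, hl⟩ := (mantissa_eq_mantissa_iff hb hx).1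
    (mantissa_of_mem_Ico hb (mantissa_mem_Ico hb hx))
  rw [hl, digitWord_mul_zpow hb hq hx]

theorem blockComplexity_eq_ncard_digitWord (b : ℕ) (q : ℝ) (n : ℕ) :
    blockComplexity q b n = {w | ∃ m : ℕ, 1 ≤ m ∧ w = digitWord b q n (q ^ m)}.ncard := by
  simp only [blockComplexity, digitWord, funext_iff, pow_add]

theorem blockComplexity_mul_zpow (hb : 1 < b) (hq : 0 < q) (k : ℤ) (n : ℕ) :
    blockComplexity (q * (b : ℝ) ^ k) b n = blockComplexity q b n := by
  have hdigit (t : ℕ) : leadingDigit b ((q * (b : ℝ) ^ k) ^ t) = leadingDigit b (q ^ t) := by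
    rw [mul_pow, ← zpow_natCast ((b : ℝ) ^ k), ← zpow_mul, leadingDigit_mul_zpow hb (by positivity)]
  simp only [blockComplexity, hdigit]

theorem digitWord_eventuallyEq_nhdsGE (hb : 1 < b) (hq : 0 < q) (hx : 0 < x) :
    ∀ᶠ z in nhdsWithin x (Set.Ici x), digitWord b q n z = digitWord b q n x := by
  simp only [funext_iff, Filter.eventually_all]
  intro i
  have hqi : 0 < q ^ (i : ℕ) := pow_pos hq _
  have hpos : 0 < x * q ^ (i : ℕ) := mul_pos hx hqi
  obtain ⟨l, hlower, hupper⟩ := exists_mem_Ico_leadingDigit_mul_zpow hb hpos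
  filter_upwards [Ico_mem_nhdsGE ((lt_div_iff₀ hqi).2 hupper)] with z hz
  exact leadingDigit_eq_of_mem_Ico hb (leadingDigit_mem_Ico hb hpos)
    ⟨hlower.trans (mul_le_mul_of_nonneg_right hz.1 hqi.le), (lt_div_iff₀ hqi).1 hz.2⟩

end DigitWord

section Density

variable {B q x y : ℝ}

theorem exists_pow_mul_zpow_mem_Ioo (hB : 1 < B) (hq : 0 < q) (hirr : Irrational (Real.logb B q))
    (hx : 0 < x) (hxy : x < y) : ∃ m : ℕ, 1 ≤ m ∧ ∃ l : ℤ, q ^ m * B ^ l ∈ Set.Ioo x y := by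
  have : Fact (0 < Real.log B) := ⟨Real.log_pos hB⟩
  have hdense : DenseRange (fun m : ℕ => m • (Real.log q : AddCircle (Real.log B))) :=
    denseRange_zsmul_iff_nsmul.1 (AddCircle.denseRange_zsmul_coe_iff.2 hirr)
  -- Shifting the target by `log q` turns the exponent found below into a positive one.
  have hopen : IsOpen ((fun z : ℝ => (z : AddCircle (Real.log B))) ''
      Set.Ioo (Real.log x - Real.log q) (Real.log y - Real.log q)) :=
    QuotientAddGroup.isOpenMap_coe _ isOpen_Ioo
  obtain ⟨m, u, hu, hum⟩ := hdense.exists_mem_open hopen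
    ((Set.nonempty_Ioo.2 (sub_lt_sub_right (Real.log_lt_log hx hxy) _)).image _)
  have hum' : (u : AddCircle (Real.log B)) = (m * Real.log q : ℝ) := by
    rw [← nsmul_eq_mul]
    exact hum
  obtain ⟨l, hl⟩ := AddSubgroup.mem_zmultiples_iff.1 (QuotientAddGroup.eq.1 hum')
  have hpos : 0 < q ^ (m + 1) * B ^ (-l) :=
    mul_pos (pow_pos hq _) (zpow_pos (zero_lt_one.trans hB) _)
  have hlog : Real.log (q ^ (m + 1) * B ^ (-l)) = u + Real.log q := by
    rw [zsmul_eq_mul] at hl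
    rw [Real.log_mul (left_ne_zero_of_mul hpos.ne') (right_ne_zero_of_mul hpos.ne'),
      Real.log_pow, Real.log_zpow]
    push_cast
    linarith
  refine ⟨m + 1, by omega, -l, ?_, ?_⟩
  · rw [← Real.log_lt_log_iff hx hpos, hlog]
    linarith [hu.1]
  · rw [← Real.log_lt_log_iff hpos (hx.trans hxy), hlog]
    linarith [hu.2]

theorem exists_digitWord_pow_eq {b n : ℕ} (hb : 1 < b) (hq : 0 < q)
    (hirr : Irrational (Real.logb b q)) (hx : 0 < x) :
    ∃ m : ℕ, 1 ≤ m ∧ digitWord b q n (q ^ m) = digitWord b q n x := by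
  obtain ⟨y, hxy, hy⟩ :=
    mem_nhdsGE_iff_exists_Ico_subset.1 (digitWord_eventuallyEq_nhdsGE (n := n) hb hq hx)
  obtain ⟨m, hm, l, hml⟩ := exists_pow_mul_zpow_mem_Ioo (mod_cast hb) hq hirr hx hxy
  refine ⟨m, hm, ?_⟩
  rw [← digitWord_mul_zpow hb hq (pow_pos hq m) l]
  exact hy (Set.Ioo_subset_Ico_self hml)

end Density

section CutPoints

variable {b n : ℕ} {q x y : ℝ}

/-- The cut points of level less than `n`: the points of the circle `[1, b)` at which one of the
leading digits of `x, x * q, …, x * q ^ (n - 1)` changes. -/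
noncomputable def cutPoints (b : ℕ) (q : ℝ) (n : ℕ) : Finset ℝ :=
  (Finset.range n).biUnion fun i => (Finset.Ico 1 b).image fun d : ℕ => mantissa b (d / q ^ i)

theorem mem_cutPoints :
    x ∈ cutPoints b q n ↔ ∃ i < n, ∃ d ∈ Finset.Ico 1 b, mantissa b (d / q ^ i) = x := by
  simp only [cutPoints, Finset.mem_biUnion, Finset.mem_range, Finset.mem_image]

theorem cutPoints_zero (b : ℕ) (q : ℝ) : cutPoints b q 0 = ∅ := by
  simp only [cutPoints, Finset.range_zero, Finset.biUnion_empty]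

theorem mem_Ico_of_mem_cutPoints (hq : 0 < q) (hx : x ∈ cutPoints b q n) :
    x ∈ Set.Ico 1 (b : ℝ) := by
  obtain ⟨i, -, d, hd, rfl⟩ := mem_cutPoints.1 hx
  have hb : 1 < b := by
    rw [Finset.mem_Ico] at hd
    omega
  exact mantissa_mem_Ico hb (div_pos (natCast_pos_of_mem_Ico_one hd) (pow_pos hq i))

theorem digitWord_ne_of_lt_cutPoint (hb : 4 ≤ b) (hq : 0 < q) (hx : x ∈ Set.Ico 1 (b : ℝ))
    (hy : y ∈ cutPoints b q n) (hxy : x < y) : digitWord b q n x ≠ digitWord b q n y := by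
  intro h
  have hb1 : 1 < b := by omega
  have hyIco := mem_Ico_of_mem_cutPoints hq hy
  obtain ⟨i, hi, d, hd, rfl⟩ := mem_cutPoints.1 hy
  set y := mantissa b (d / q ^ i)
  have hqi : 0 < q ^ i := pow_pos hq i
  have hd0 := natCast_pos_of_mem_Ico_one hd
  obtain ⟨l, hl⟩ : ∃ l : ℤ, y = d / q ^ i * (b : ℝ) ^ l :=
    (mantissa_eq_mantissa_iff hb1 (div_pos hd0 hqi)).1 (mantissa_of_mem_Ico hb1 hyIco)
  have hyq : y * q ^ i = d * (b : ℝ) ^ l := by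
    rw [hl, mul_right_comm, div_mul_cancel₀ _ hqi.ne']
  have hfirst : leadingDigit b x = leadingDigit b y := by
    simpa only [digitWord, pow_zero, mul_one] using congrFun h ⟨0, by omega⟩
  have hdigit : leadingDigit b (x * q ^ i) = d := by
    have hith : leadingDigit b (x * q ^ i) = leadingDigit b (y * q ^ i) := congrFun h ⟨i, hi⟩
    rw [hith, hyq, leadingDigit_natCast_mul_zpow hb1 hd]
  refine leadingDigit_ne_of_lt_natCast_mul_zpow (l := l) hb hd
    (mul_pos (zero_lt_one.trans_le hx.1) hqi) ?_ ?_ hdigit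
  · rw [← hyq]
    exact mul_lt_mul_of_pos_right hxy hqi
  · rw [← hyq, ← mul_assoc]
    exact mul_lt_mul_of_pos_right (lt_two_mul_of_leadingDigit_eq hb1 hx hyIco hfirst) hqi

theorem digitWord_injOn_cutPoints (hb : 4 ≤ b) (hq : 0 < q) :
    Set.InjOn (digitWord b q n) (cutPoints b q n) := by
  intro x hx y hy h
  rcases lt_trichotomy x y with hlt | heq | hgt
  · exact absurd h (digitWord_ne_of_lt_cutPoint hb hq (mem_Ico_of_mem_cutPoints hq hx) hy hlt)
  · exact heq
  · exact absurd h.symm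
      (digitWord_ne_of_lt_cutPoint hb hq (mem_Ico_of_mem_cutPoints hq hy) hx hgt)

theorem exists_cutPoint_digitWord_eq (hb : 1 < b) (hq : 0 < q) (hn : n ≠ 0) (hx : 0 < x) :
    ∃ c ∈ cutPoints b q n, digitWord b q n c = digitWord b q n x := by
  have hqpow (i : Fin n) : 0 < q ^ (i : ℕ) := pow_pos hq _
  have hpos (i : Fin n) : 0 < x * q ^ (i : ℕ) := mul_pos hx (hqpow i)
  have hdigit (i : Fin n) : digitWord b q n x i ∈ Finset.Ico 1 b := leadingDigit_mem_Ico hb (hpos i)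
  choose l hlower hupper using fun i => exists_mem_Ico_leadingDigit_mul_zpow hb (hpos i)
  have : Nonempty (Fin n) := ⟨⟨0, Nat.pos_of_ne_zero hn⟩⟩
  -- The last cut point met before `x`.
  obtain ⟨i, hi⟩ := Finite.exists_max
    fun i : Fin n => digitWord b q n x i * (b : ℝ) ^ l i / q ^ (i : ℕ)
  have hcut : 0 < digitWord b q n x i / q ^ (i : ℕ) :=
    div_pos (natCast_pos_of_mem_Ico_one (hdigit i)) (hqpow i)
  refine ⟨_, mem_cutPoints.2 ⟨i, i.2, _, hdigit i, rfl⟩, ?_⟩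
  rw [digitWord_mantissa hb hq hcut, ← digitWord_mul_zpow hb hq hcut (l i), div_mul_eq_mul_div]
  funext j
  refine leadingDigit_eq_of_mem_Ico hb (hdigit j) (l := l j) ⟨(div_le_iff₀ (hqpow j)).1 (hi j), ?_⟩
  calc digitWord b q n x i * (b : ℝ) ^ l i / q ^ (i : ℕ) * q ^ (j : ℕ)
      ≤ x * q ^ (j : ℕ) :=
        mul_le_mul_of_nonneg_right ((div_le_iff₀ (hqpow i)).2 (hlower i)) (hqpow j).le
    _ < (digitWord b q n x j + 1) * (b : ℝ) ^ l j := hupper j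

theorem blockComplexity_eq_card_cutPoints (hb : 4 ≤ b) (hq : 0 < q)
    (hirr : Irrational (Real.logb b q)) (hn : n ≠ 0) :
    blockComplexity q b n = (cutPoints b q n).card := by
  have hb1 : 1 < b := by omega
  have himage : {w | ∃ m : ℕ, 1 ≤ m ∧ w = digitWord b q n (q ^ m)} =
      digitWord b q n '' cutPoints b q n := by
    ext w
    constructor
    · rintro ⟨m, -, rfl⟩
      exact exists_cutPoint_digitWord_eq hb1 hq hn (pow_pos hq m)
    · rintro ⟨c, hc, rfl⟩
      have hc0 := zero_lt_one.trans_le (mem_Ico_of_mem_cutPoints hq hc).1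
      obtain ⟨m, hm, hword⟩ := exists_digitWord_pow_eq hb1 hq hirr hc0
      exact ⟨m, hm, hword.symm⟩
  rw [blockComplexity_eq_ncard_digitWord, himage, (digitWord_injOn_cutPoints hb hq).ncard_image,
    Set.ncard_coe_finset]

theorem card_cutPoints_succ (hb : 1 < b) (hq : 0 < q) (n : ℕ) :
    (cutPoints b q (n + 1)).card = (cutPoints b q n).card +
      {d ∈ Finset.Ico 1 b | mantissa b ((d : ℕ) / q ^ n) ∉ cutPoints b q n}.card := by
  have hunion : cutPoints b q (n + 1) = cutPoints b q n ∪
      {d ∈ Finset.Ico 1 b | mantissa b ((d : ℕ) / q ^ n) ∉ cutPoints b q n}.image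
        fun d : ℕ => mantissa b (d / q ^ n) := by
    rw [← Finset.filter_image (p := (· ∉ cutPoints b q n)), ← Finset.sdiff_eq_filter,
      Finset.union_sdiff_self_eq_union, Finset.union_comm, cutPoints, Finset.range_add_one,
      Finset.biUnion_insert, cutPoints]
  rw [hunion, Finset.card_union_of_disjoint, Finset.card_image_of_injOn]
  · exact (mantissa_div_pow_injOn hb hq n).mono (Finset.coe_subset.2 (Finset.filter_subset _ _))
  · rw [← Finset.filter_image (p := (· ∉ cutPoints b q n)), ← Finset.sdiff_eq_filter]
    exact Finset.disjoint_sdiff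

end CutPoints

section Redundant

variable {b r s d e t m : ℕ}

theorem dvd_of_pow_succ_dvd_mul_pow (hb : Squarefree b) (h : r ^ (t + 1) ∣ d * b ^ t) : r ∣ d := by
  rcases eq_or_ne r 0 with rfl | hr
  · simpa [hb.ne_zero] using h
  have hg : 0 < b.gcd r := Nat.gcd_pos_of_pos_right _ (Nat.pos_of_ne_zero hr)
  have hcop : (r ^ (t + 1)).Coprime ((b / b.gcd r) ^ t) :=
    ((Nat.coprime_div_gcd_of_squarefree hb hr).pow _ _).symm
  have hbpow : d * b ^ t = d * b.gcd r ^ t * (b / b.gcd r) ^ t := by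
    rw [mul_assoc, ← mul_pow, Nat.mul_div_cancel' (Nat.gcd_dvd_left b r)]
  have hdvd : r ^ (t + 1) ∣ d * b.gcd r ^ t := hcop.dvd_of_dvd_mul_right (hbpow ▸ h)
  refine Nat.dvd_of_mul_dvd_mul_right (pow_pos hg t) (dvd_trans ?_ hdvd)
  rw [pow_succ']
  exact mul_dvd_mul_left r (pow_dvd_pow_of_dvd (Nat.gcd_dvd_right b r) t)

theorem div_gcd_dvd_of_pow_dvd_mul_pow (hr : r ≠ 0) (ht : t ≠ 0) (h : r ^ t ∣ d * b ^ t) :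
    r / b.gcd r ∣ d := by
  have hg : 0 < b.gcd r := Nat.gcd_pos_of_pos_right _ (Nat.pos_of_ne_zero hr)
  have hcop : ((r / b.gcd r) ^ t).Coprime ((b / b.gcd r) ^ t) :=
    ((Nat.coprime_div_gcd_div_gcd hg).pow _ _).symm
  have hdvd : (r / b.gcd r) ^ t * b.gcd r ^ t ∣ d * (b / b.gcd r) ^ t * b.gcd r ^ t := by
    rwa [mul_assoc, ← mul_pow, ← mul_pow, Nat.div_mul_cancel (Nat.gcd_dvd_left b r),
      Nat.div_mul_cancel (Nat.gcd_dvd_right b r)]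
  exact (dvd_pow_self _ ht).trans
    (hcop.dvd_of_dvd_mul_right (Nat.dvd_of_mul_dvd_mul_right (pow_pos hg t) hdvd))

theorem le_of_mul_pow_mul_pow_eq (hs : 0 < s) (hrb : r ≤ b * s) (hd : d ≠ 0) (he : e < b)
    (h : d * s ^ t * b ^ m = e * r ^ t) : m ≤ t := by
  have hb0 : 0 < b := by omega
  have hlt : s ^ t * b ^ m < s ^ t * b ^ (t + 1) :=
    calc s ^ t * b ^ m ≤ d * (s ^ t * b ^ m) := Nat.le_mul_of_pos_left _ (Nat.pos_of_ne_zero hd)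
      _ = e * r ^ t := by rw [← h, mul_assoc]
      _ ≤ e * (b * s) ^ t := by gcongr
      _ < b * (b * s) ^ t := by gcongr
      _ = s ^ t * b ^ (t + 1) := by ring
  by_contra! htm
  exact (lt_of_mul_lt_mul_left hlt (Nat.zero_le _)).not_ge (Nat.pow_le_pow_right hb0 htm)

theorem mul_lt_of_mul_pow_mul_pow_eq (hr : r ≠ 0) (hrb : r ≤ b * s) (he : e < b) (ht : t ≠ 0)
    (h : d * s ^ t * b ^ t = e * r ^ t) : d * s < r := by
  obtain ⟨u, rfl⟩ := Nat.exists_eq_succ_of_ne_zero ht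
  by_contra! hrd
  have hle : b * r ^ (u + 1) ≤ e * r ^ (u + 1) :=
    calc b * r ^ (u + 1) = b * (r * r ^ u) := by rw [pow_succ']
      _ ≤ b * (d * s * (b * s) ^ u) := by gcongr
      _ = d * s ^ (u + 1) * b ^ (u + 1) := by ring
      _ = e * r ^ (u + 1) := h
  exact he.not_ge (Nat.le_of_mul_le_mul_right hle (pow_pos (Nat.pos_of_ne_zero hr) _))

/-- A digit `d` is redundant if, for squarefree `b`, the cut points `d / (r / s) ^ i` with `i ≥ 1`
already occur at a lower level. The two alternatives correspond to `d / (r / s)` being of the form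
`e` and `e / b`, respectively, for a digit `e`. -/
def IsRedundant (b r s d : ℕ) : Prop :=
  r ∣ d ∨ r / b.gcd r ∣ d ∧ d * s < r

instance : DecidablePred (IsRedundant b r s) :=
  fun d => inferInstanceAs (Decidable (r ∣ d ∨ r / b.gcd r ∣ d ∧ d * s < r))

theorem isRedundant_of_mul_pow_eq (hco : r.Coprime s) (ht : t ≠ 0)
    (h : d * s ^ t = e * r ^ t * b ^ m) : IsRedundant b r s d := by
  have hdvd : r ^ t ∣ d * s ^ t := ⟨e * b ^ m, by rw [h]; ring⟩
  exact Or.inl ((dvd_pow_self r ht).trans ((hco.pow t t).dvd_of_dvd_mul_right hdvd))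

theorem isRedundant_of_mul_pow_mul_pow_eq (hsf : Squarefree b) (hr : r ≠ 0) (hs : 0 < s)
    (hco : r.Coprime s) (hrb : r ≤ b * s) (hd : d ≠ 0) (he : e < b) (ht : t ≠ 0)
    (h : d * s ^ t * b ^ m = e * r ^ t) : IsRedundant b r s d := by
  have hdvd : r ^ t ∣ d * b ^ m := by
    refine (hco.pow t t).dvd_of_dvd_mul_right ⟨e, ?_⟩
    rw [mul_right_comm, h, mul_comm]
  rcases (le_of_mul_pow_mul_pow_eq hs hrb hd he h).lt_or_eq with hlt | rfl
  · obtain ⟨u, rfl⟩ := Nat.exists_eq_succ_of_ne_zero ht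
    exact Or.inl (dvd_of_pow_succ_dvd_mul_pow hsf
      (hdvd.trans (mul_dvd_mul_left d (pow_dvd_pow b (Nat.lt_succ_iff.1 hlt)))))
  · exact Or.inr ⟨div_gcd_dvd_of_pow_dvd_mul_pow hr ht hdvd,
      mul_lt_of_mul_pow_mul_pow_eq hr hrb he ht h⟩

theorem isRedundant_of_mul_pow_eq_mul_zpow (hsf : Squarefree b) (hr : r ≠ 0) (hs : 0 < s)
    (hco : r.Coprime s) (hrb : r ≤ b * s) (hd : d ≠ 0) (he : e < b) (ht : t ≠ 0) {l : ℤ}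
    (h : (d : ℝ) * s ^ t = e * r ^ t * (b : ℝ) ^ l) : IsRedundant b r s d := by
  obtain ⟨m, rfl | rfl⟩ := l.eq_nat_or_neg
  · rw [zpow_natCast] at h
    exact isRedundant_of_mul_pow_eq hco ht (mod_cast h)
  · have hb0 : (b : ℝ) ^ m ≠ 0 := pow_ne_zero _ (Nat.cast_ne_zero.2 hsf.ne_zero)
    rw [zpow_neg, zpow_natCast, ← div_eq_mul_inv, eq_div_iff hb0] at h
    exact isRedundant_of_mul_pow_mul_pow_eq hsf hr hs hco hrb hd he ht (mod_cast h)

theorem exists_mul_mul_pow_eq_of_isRedundant (hs : 0 < s) (hsr : s ≤ r)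
    (hd : d ∈ Finset.Ico 1 b) (h : IsRedundant b r s d) :
    ∃ e ∈ Finset.Ico 1 b, ∃ m, d * s * b ^ m = e * r := by
  simp only [Finset.mem_Ico, Nat.one_le_iff_ne_zero] at hd ⊢
  obtain ⟨hd0, hdb⟩ := hd
  rcases h with ⟨f, rfl⟩ | ⟨⟨f, hf⟩, hlt⟩
  · exact ⟨s * f, ⟨mul_ne_zero hs.ne' (right_ne_zero_of_mul hd0),
      (Nat.mul_le_mul_right f hsr).trans_lt hdb⟩, 0, by ring⟩
  · have heq : d * s * b ^ 1 = s * f * (b / b.gcd r) * r := by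
      calc d * s * b ^ 1
          = r / b.gcd r * f * s * (b / b.gcd r * b.gcd r) := by
            rw [← hf, Nat.div_mul_cancel (Nat.gcd_dvd_left b r), pow_one]
        _ = s * f * (b / b.gcd r) * (r / b.gcd r * b.gcd r) := by ring
        _ = s * f * (b / b.gcd r) * r := by rw [Nat.div_mul_cancel (Nat.gcd_dvd_right b r)]
    refine ⟨s * f * (b / b.gcd r), ⟨?_, ?_⟩, 1, heq⟩
    · refine left_ne_zero_of_mul (b := r) ?_
      rw [← heq]
      have hb0 : b ≠ 0 := by omega
      positivity
    · refine lt_of_mul_lt_mul_right (a := r) ?_ (Nat.zero_le r)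
      rw [← heq, pow_one, mul_comm b r]
      exact Nat.mul_lt_mul_of_pos_right hlt (by omega)

theorem mantissa_mem_cutPoints_iff_isRedundant {i : ℕ} (hsf : Squarefree b) (hs : 0 < s)
    (hco : r.Coprime s) (hsr : s ≤ r) (hrb : r ≤ b * s) (hd : d ∈ Finset.Ico 1 b) (hi : i ≠ 0) :
    mantissa b (d / ((r : ℝ) / s) ^ i) ∈ cutPoints b ((r : ℝ) / s) i ↔ IsRedundant b r s d := by
  have hr : 0 < r := hs.trans_le hsr
  have hb : 1 < b := by
    rw [Finset.mem_Ico] at hd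
    omega
  have hq : 0 < (r : ℝ) / s := by positivity
  have hd0 := natCast_pos_of_mem_Ico_one hd
  constructor
  · intro h
    obtain ⟨j, hj, e, he, heq⟩ := mem_cutPoints.1 h
    have he0 := natCast_pos_of_mem_Ico_one he
    obtain ⟨t, rfl⟩ := Nat.exists_eq_add_of_lt hj
    obtain ⟨l, hl⟩ := (mantissa_eq_mantissa_iff hb (div_pos he0 (pow_pos hq j))).1 heq.symm
    refine isRedundant_of_mul_pow_eq_mul_zpow (t := t + 1) (l := l) hsf hr.ne' hs hco hrb
      (Nat.cast_ne_zero.1 hd0.ne') (Finset.mem_Ico.1 he).2 t.succ_ne_zero ?_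
    rw [add_assoc, pow_add] at hl
    field_simp at hl
    rw [hl, div_pow]
    field_simp
  · intro h
    obtain ⟨i, rfl⟩ := Nat.exists_eq_succ_of_ne_zero hi
    obtain ⟨e, he, m, hm⟩ := exists_mul_mul_pow_eq_of_isRedundant hs hsr hd h
    refine mem_cutPoints.2 ⟨i, i.lt_succ_self, e, he,
      (mantissa_eq_mantissa_iff hb (div_pos hd0 (pow_pos hq _))).2 ⟨m, ?_⟩⟩
    have hm' : (d : ℝ) * s * b ^ m = e * r := mod_cast hm
    rw [zpow_natCast, Nat.succ_eq_add_one, pow_succ]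
    field_simp
    linarith

end Redundant

section Counting

variable {b r s n : ℕ}

theorem Ico_one_eq_Ioc_zero_sub_one (b : ℕ) : Finset.Ico 1 b = Finset.Ioc 0 (b - 1) := by
  ext d
  simp only [Finset.mem_Ico, Finset.mem_Ioc]
  omega

theorem card_filter_dvd_Ico_one (b r : ℕ) : {d ∈ Finset.Ico 1 b | r ∣ d}.card = (b - 1) / r := by
  rw [Ico_one_eq_Ioc_zero_sub_one, Nat.Ioc_filter_dvd_card_eq_div]

theorem card_filter_dvd_and_mul_lt {g k : ℕ} (hk : 0 < k) (hs : 0 < s) (hkg : k * g ≤ b * s) :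
    {d ∈ Finset.Ico 1 b | k ∣ d ∧ d * s < k * g}.card = (g - 1) / s := by
  have hmultiples : {d ∈ Finset.Ico 1 b | k ∣ d ∧ d * s < k * g} =
      {d ∈ Finset.Ioc 0 (k * ((g - 1) / s)) | k ∣ d} := by
    ext d
    simp only [Finset.mem_filter, Finset.mem_Ico, Finset.mem_Ioc]
    constructor
    · rintro ⟨⟨hd, -⟩, ⟨f, rfl⟩, hlt⟩
      have hfg : f * s < g := by
        rw [mul_assoc] at hlt
        exact lt_of_mul_lt_mul_left hlt hk.le
      refine ⟨⟨hd, Nat.mul_le_mul_left k ?_⟩, dvd_mul_right k f⟩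
      rw [Nat.le_div_iff_mul_le hs]
      omega
    · rintro ⟨⟨hd, hle⟩, f, rfl⟩
      have hf : 0 < f := Nat.pos_of_mul_pos_left hd
      have hfg : f * s ≤ g - 1 :=
        (Nat.le_div_iff_mul_le hs).1 (Nat.le_of_mul_le_mul_left hle hk)
      have hpos : 0 < f * s := Nat.mul_pos hf hs
      have hlt : k * f * s < k * g := by
        rw [mul_assoc]
        exact Nat.mul_lt_mul_of_pos_left (by omega) hk
      exact ⟨⟨hd, lt_of_mul_lt_mul_right (hlt.trans_le hkg) hs.le⟩, dvd_mul_right k f, hlt⟩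
  rw [hmultiples, Nat.Ioc_filter_dvd_card_eq_div, Nat.mul_div_cancel_left _ hk]

theorem card_filter_isRedundant (hr : 0 < r) (hs : 0 < s) (hrb : r ≤ b * s) :
    {d ∈ Finset.Ico 1 b | IsRedundant b r s d}.card = (b - 1) / r + (b.gcd r - 1) / s := by
  have hdiv : r / b.gcd r * b.gcd r = r := Nat.div_mul_cancel (Nat.gcd_dvd_right b r)
  have hk : 0 < r / b.gcd r := Nat.div_pos (Nat.gcd_le_right b hr) (Nat.gcd_pos_of_pos_right b hr)
  have hsecond := card_filter_dvd_and_mul_lt hk hs (hdiv.trans_le hrb)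
  rw [hdiv] at hsecond
  have hunion : {d ∈ Finset.Ico 1 b | IsRedundant b r s d} =
      {d ∈ Finset.Ico 1 b | r ∣ d} ∪ {d ∈ Finset.Ico 1 b | r / b.gcd r ∣ d ∧ d * s < r} := by
    ext d
    simp only [Finset.mem_filter, Finset.mem_union, ← and_or_left]
    rfl
  rw [hunion, Finset.card_union_of_disjoint, card_filter_dvd_Ico_one, hsecond]
  refine Finset.disjoint_filter.2 fun d hd hrd hlt => ?_
  have hrle : r ≤ d := Nat.le_of_dvd (Finset.mem_Ico.1 hd).1 hrd
  exact ((Nat.le_mul_of_pos_right d hs).trans_lt hlt.2).not_ge hrle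

theorem card_filter_not_isRedundant (hb : 0 < b) (hr : 0 < r) (hs : 0 < s) (hrb : r ≤ b * s) :
    ({d ∈ Finset.Ico 1 b | ¬ IsRedundant b r s d}.card : ℤ) =
      b - 1 - ((b - 1) / r : ℕ) - ((b.gcd r - 1) / s : ℕ) := by
  have hsum := Finset.card_filter_add_card_filter_not (s := Finset.Ico 1 b) (IsRedundant b r s)
  rw [card_filter_isRedundant hr hs hrb, Nat.card_Ico] at hsum
  omega

theorem card_cutPoints_add_one (hsf : Squarefree b) (hb : 1 < b) (hs : 0 < s) (hco : r.Coprime s)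
    (hsr : s ≤ r) (hrb : r ≤ b * s) (n : ℕ) :
    (cutPoints b ((r : ℝ) / s) (n + 1)).card =
      b - 1 + n * {d ∈ Finset.Ico 1 b | ¬ IsRedundant b r s d}.card := by
  have hq : 0 < (r : ℝ) / s := div_pos (mod_cast hs.trans_le hsr) (mod_cast hs)
  induction n with
  | zero => simp [card_cutPoints_succ hb hq, cutPoints_zero]
  | succ n ih =>
    have hnew : {d ∈ Finset.Ico 1 b |
          mantissa b ((d : ℕ) / ((r : ℝ) / s) ^ (n + 1)) ∉ cutPoints b ((r : ℝ) / s) (n + 1)} =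
        {d ∈ Finset.Ico 1 b | ¬ IsRedundant b r s d} :=
      Finset.filter_congr fun d hd => not_congr
        (mantissa_mem_cutPoints_iff_isRedundant hsf hs hco hsr hrb hd n.succ_ne_zero)
    rw [card_cutPoints_succ hb hq, ih, hnew, add_one_mul, add_assoc]

end Counting

section Irrationality

theorem irrational_logb_of_forall_pow_ne_zpow {x y : ℝ} (hx : 1 < x) (hy : 0 < y)
    (h : ∀ t : ℕ, t ≠ 0 → ∀ m : ℤ, y ^ t ≠ x ^ m) : Irrational (Real.logb x y) := by
  rintro ⟨c, hc⟩
  refine h c.den c.den_nz c.num (Real.logb_injOn_pos hx (pow_pos hy _)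
    (zpow_pos (zero_lt_one.trans hx) _) ?_)
  rw [Real.logb_pow, ← hc, ← Real.rpow_intCast, Real.logb_rpow (zero_lt_one.trans hx) hx.ne']
  exact_mod_cast c.den_mul_eq_num

theorem irrational_logb_div {b r s : ℕ} (hsf : Squarefree b) (hs : 0 < s) (hco : r.Coprime s)
    (hsr : s < r) (hrb : r < b * s) : Irrational (Real.logb b ((r : ℝ) / s)) := by
  have hr0 : (0 : ℝ) < r := mod_cast hs.trans hsr
  have hs0 : (0 : ℝ) < s := mod_cast hs
  have hb : 1 < b := lt_of_mul_lt_mul_right (a := s) (by omega) hs.le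
  have hb1 : (1 : ℝ) < b := mod_cast hb
  have hq : 1 < (r : ℝ) / s := (one_lt_div hs0).2 (mod_cast hsr)
  refine irrational_logb_of_forall_pow_ne_zpow hb1 (div_pos hr0 hs0) fun t ht l heq => ?_
  have hl : 0 < l := (one_lt_zpow_iff_right₀ hb1).1 (heq ▸ one_lt_pow₀ hq ht)
  lift l to ℕ using hl.le with m
  have hnat : r ^ t = b ^ m * s ^ t := by
    rw [zpow_natCast, div_pow, div_eq_iff (pow_pos hs0 t).ne'] at heq
    exact_mod_cast heq
  have hmt : m < t := by
    refine (Nat.pow_lt_pow_iff_right hb).1 (lt_of_mul_lt_mul_right (a := s ^ t) ?_ (Nat.zero_le _))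
    rw [← hnat, ← mul_pow]
    exact Nat.pow_lt_pow_left hrb ht
  obtain ⟨u, rfl⟩ := Nat.exists_eq_succ_of_ne_zero ht
  have hdvd : r ^ (u + 1) ∣ 1 * b ^ u := by
    rw [one_mul]
    exact ((hco.pow _ _).dvd_of_dvd_mul_right hnat.dvd).trans
      (pow_dvd_pow b (Nat.lt_succ_iff.1 hmt))
  have hr1 : r = 1 := Nat.dvd_one.1 (dvd_of_pow_succ_dvd_mul_pow hsf hdvd)
  omega

end Irrationality

/-- Main Theorem: For squarefree `b ≥ 5` and positive rational `a`
not an integral power of `b`, writing `a = (r/s)·b^k` with `r, s` coprime and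
`1 < r/s < b`, the block complexity satisfies `p_{a,b}(n) = c·n + d` with
`c = b - 1 - ⌊(b-1)/r⌋ - ⌊(gcd(b,r)-1)/s⌋` and `d = b - 1 - c`. -/
theorem blockComplexity_linear (b : ℕ) (hb : 5 ≤ b) (hsf : Squarefree b)
    (a : ℚ) (ha : 0 < a) (hnp : ∀ j : ℤ, (a : ℝ) ≠ (b : ℝ) ^ j)
    (r s : ℕ) (k : ℤ) (hr : 0 < r) (hs : 0 < s) (hco : Nat.Coprime r s)
    (hrep : (a : ℝ) = ((r : ℝ) / s) * (b : ℝ) ^ k)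
    (h1 : (s : ℝ) < r) (h2 : (r : ℝ) < (b : ℝ) * s) :
    ∀ n : ℕ, 1 ≤ n →
      (blockComplexity (a : ℝ) b n : ℤ) =
        ((b : ℤ) - 1 - ((b - 1) / r : ℕ) - ((Nat.gcd b r - 1) / s : ℕ)) * n +
          (((b - 1) / r : ℕ) + ((Nat.gcd b r - 1) / s : ℕ)) := by
  intro n hn
  have hsr : s < r := mod_cast h1
  have hrb : r < b * s := mod_cast h2
  have hq : 0 < (r : ℝ) / s := div_pos (mod_cast hr) (mod_cast hs)
  have hirr := irrational_logb_div hsf hs hco hsr hrb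
  have hcard := card_filter_not_isRedundant (by omega) hr hs hrb.le
  obtain ⟨n, rfl⟩ := Nat.exists_eq_add_of_le' hn
  rw [hrep, blockComplexity_mul_zpow (by omega) hq,
    blockComplexity_eq_card_cutPoints (by omega) hq hirr n.succ_ne_zero,
    card_cutPoints_add_one hsf (by omega) hs hco hsr.le hrb.le]
  push_cast [hcard, Nat.cast_sub (show 1 ≤ b by omega)]
  ring
end

section
/- For every non-squarefree integer b ≥ 5 there exists an integer a with 1 < a < b such that the block complexity p_{a,b}(n) of the leading digit sequence of a^n in base b is not of the form c·n + d for all n ≥ 1 with integers c ≥ 1 and d. -/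
/-!
Modulo `1`, the base-`b` logarithms of the powers of `a` are the orbit of `0` under the rotation by
`α = log_b a`, and leading digits code this orbit by the arcs `[log_b d, log_b (d + 1))`. If `α` has
finite order, the complexity is bounded. Otherwise the orbit is dense and, each arc being at most
half the circle, the blocks of length `n` correspond to the points `log_b d - i α` with
`1 ≤ d < b` and `i < n`. Linear complexity would mean that each new `i` contributes equally many new
points.
When `b = a ^ 2 * m`, the digit `(a + 1) * m` equals `b * (a + 1) / a ^ 2`, so its logarithm is
`log_b (a + 1) - 2 α` while it is no `log_b d - α`: this coincidence makes the third increment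
smaller than the second.
-/

open Finset in
lemma card_union_image_add_card_lt {γ : Type*} [DecidableEq γ] {f : γ → γ}
    (hf : Function.Injective f) {s t : Finset γ} (hst : s ⊆ t) (hfst : s.image f ⊆ t) {x : γ}
    (hxt : x ∈ t) (hxft : x ∈ t.image f) (hxfs : x ∉ s.image f) :
    #(t ∪ t.image f) + #s < 2 * #t := by
  have image_ssubset : s.image f ⊂ t ∩ t.image f :=
    (ssubset_iff_of_subset (subset_inter hfst (image_subset_image hst))).2
      ⟨x, mem_inter.2 ⟨hxt, hxft⟩, hxfs⟩
  have card_lt := card_lt_card image_ssubset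
  have card_add := card_union_add_card_inter t (t.image f)
  rw [card_image_of_injective _ hf] at card_lt card_add
  omega

lemma exists_pos_nsmul_mem_of_isOpen {G : Type*} [AddGroup G] [TopologicalSpace G] [CompactSpace G]
    [IsTopologicalAddGroup G] {α : G} (hα : DenseRange (· • α : ℤ → G)) {U : Set G}
    (hU : IsOpen U) (hne : U.Nonempty) : ∃ m : ℕ, 1 ≤ m ∧ m • α ∈ U := by
  have dense : DenseRange (· • α : ℕ → G) := by
    rw [DenseRange, dense_iff_closure_eq] at hα ⊢
    rw [← hα, closure_range_zsmul_eq_nsmul]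
  obtain ⟨x, hx⟩ := hne
  obtain ⟨m, hm⟩ := dense.exists_mem_open (hU.preimage (continuous_add_const α))
    ⟨x - α, by simpa using hx⟩
  exact ⟨m + 1, by omega, by rwa [succ_nsmul]⟩

lemma unitAddCircle_coe_eq_coe_iff {s t : ℝ} :
    (s : UnitAddCircle) = t ↔ ∃ k : ℤ, s = t + k := by
  rw [← sub_eq_zero, ← AddCircle.coe_sub, AddCircle.coe_eq_zero_iff]
  simp only [zsmul_eq_mul, mul_one, eq_comm (b := s - t), sub_eq_iff_eq_add']

section CircleDigit

variable {b : ℕ}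

/-- The logarithm of `x` to base `b`, as a point of the circle `ℝ / ℤ`. -/
noncomputable def circleLog (b : ℕ) (x : ℝ) : UnitAddCircle :=
  (Real.logb b x : ℝ)

/-- The leading digit in base `b` of the positive reals whose logarithm modulo `1` is `θ`. -/
noncomputable def circleDigit (b : ℕ) (θ : UnitAddCircle) : ℕ :=
  ⌊(b : ℝ) ^ (AddCircle.equivIco 1 0 θ : ℝ)⌋₊

/-- The logarithms modulo `1` of the digits `1, …, b - 1`: the left endpoints of the arcs on which
`circleDigit b` is constant. -/
noncomputable def digitPoints (b : ℕ) : Finset UnitAddCircle :=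
  (Finset.Ico 1 b).image fun d : ℕ ↦ circleLog b d

lemma circleLog_mul {x y : ℝ} (hx : x ≠ 0) (hy : y ≠ 0) :
    circleLog b (x * y) = circleLog b x + circleLog b y := by
  simp only [circleLog, Real.logb_mul hx hy, AddCircle.coe_add]

lemma circleLog_pow (x : ℝ) (n : ℕ) : circleLog b (x ^ n) = n • circleLog b x := by
  simp only [circleLog, Real.logb_pow, ← AddCircle.coe_nsmul, nsmul_eq_mul]

lemma circleLog_base (hb : 1 < b) : circleLog b b = 0 := by
  rw [circleLog, Real.logb_self_eq_one (by exact_mod_cast hb), AddCircle.coe_period]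

lemma circleLog_injOn (hb : 1 < b) : Set.InjOn (circleLog b) (Set.Ico 1 b) := by
  have hb' : (1 : ℝ) < b := by exact_mod_cast hb
  have logb_mem {x : ℝ} (hx : x ∈ Set.Ico (1 : ℝ) b) : Real.logb b x ∈ Set.Ico 0 (0 + 1) :=
    ⟨Real.logb_nonneg hb' hx.1, by
      rw [zero_add, Real.logb_lt_iff_lt_rpow hb' (zero_lt_one.trans_le hx.1), Real.rpow_one]
      exact hx.2⟩
  intro x hx y hy hxy
  exact Real.logb_injOn_pos hb' (zero_lt_one.trans_le hx.1) (zero_lt_one.trans_le hy.1)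
    ((AddCircle.coe_eq_coe_iff_of_mem_Ico (logb_mem hx) (logb_mem hy)).1 hxy)

lemma circleLog_mem_digitPoints_iff (hb : 1 < b) {x : ℝ} (hx : x ∈ Set.Ico (1 : ℝ) b) :
    circleLog b x ∈ digitPoints b ↔ ∃ d : ℕ, (d : ℝ) = x := by
  rw [digitPoints, Finset.mem_image]
  constructor
  · rintro ⟨d, hd, hdx⟩
    have digit_mem : (d : ℝ) ∈ Set.Ico (1 : ℝ) b := by
      rw [Set.mem_Ico]
      exact_mod_cast Finset.mem_Ico.1 hd
    exact ⟨d, circleLog_injOn hb digit_mem hx hdx⟩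
  · rintro ⟨d, rfl⟩
    exact ⟨d, Finset.mem_Ico.2 (by exact_mod_cast Set.mem_Ico.1 hx), rfl⟩

lemma circleDigit_coe (t : ℝ) : circleDigit b t = ⌊(b : ℝ) ^ Int.fract t⌋₊ := by
  rw [circleDigit, AddCircle.coe_equivIco_mk_apply, div_one, mul_one]

lemma leadingDigit_eq_circleDigit (hb : 1 < b) {x : ℝ} (hx : 0 < x) :
    leadingDigit b x = circleDigit b (circleLog b x) := by
  have hb' : (1 : ℝ) < b := by exact_mod_cast hb
  have hb₀ : (0 : ℝ) < b := zero_lt_one.trans hb'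
  rw [circleLog, circleDigit_coe, Int.fract, Real.rpow_sub hb₀, Real.rpow_logb hb₀ hb'.ne' hx,
    Real.rpow_intCast]
  rfl

lemma circleDigit_mem_Ico (hb : 1 < b) (θ : UnitAddCircle) :
    circleDigit b θ ∈ Finset.Ico 1 b := by
  have hb' : (1 : ℝ) < b := by exact_mod_cast hb
  obtain ⟨t, rfl⟩ := QuotientAddGroup.mk_surjective θ
  rw [circleDigit_coe, Finset.mem_Ico]
  refine ⟨Nat.le_floor ?_, (Nat.floor_lt (by positivity)).2 ?_⟩
  · exact_mod_cast Real.one_le_rpow hb'.le (Int.fract_nonneg t)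
  · simpa only [Real.rpow_one] using Real.rpow_lt_rpow_of_exponent_lt hb' (Int.fract_lt_one t)

lemma circleDigit_coe_eq_iff {d : ℕ} (hd : d ∈ Finset.Ico 1 b) (t : ℝ) :
    circleDigit b t = d ↔
      ∃ k : ℤ, t ∈ Set.Ico (Real.logb b d + k) (Real.logb b (d + 1) + k) := by
  obtain ⟨hd₁, hdb⟩ := Finset.mem_Ico.1 hd
  have hb : (1 : ℝ) < b := by exact_mod_cast hd₁.trans_lt hdb
  have hd₀ : (1 : ℝ) ≤ d := by exact_mod_cast hd₁
  have fract_iff : circleDigit b t = d ↔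
      Real.logb b d ≤ Int.fract t ∧ Int.fract t < Real.logb b (d + 1) := by
    rw [circleDigit_coe, Nat.floor_eq_iff (by positivity),
      Real.logb_le_iff_le_rpow hb (by positivity), Real.lt_logb_iff_rpow_lt hb (by positivity)]
  rw [fract_iff]
  constructor
  · rintro ⟨hl, hr⟩
    exact ⟨⌊t⌋, by linarith [Int.floor_add_fract t], by linarith [Int.floor_add_fract t]⟩
  · rintro ⟨k, hl, hr⟩
    have logb_nonneg : 0 ≤ Real.logb b d := Real.logb_nonneg hb hd₀
    have logb_le_one : Real.logb b (d + 1) ≤ 1 := by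
      rw [Real.logb_le_iff_le_rpow hb (by positivity), Real.rpow_one]
      exact_mod_cast hdb
    have floor_eq : ⌊t⌋ = k := Int.floor_eq_iff.2 ⟨by linarith, by linarith⟩
    rw [Int.fract, floor_eq]
    exact ⟨by linarith, by linarith⟩

lemma exists_arc_circleDigit_eq (hb : 1 < b) (t : ℝ) :
    ∃ s r : ℝ, t ∈ Set.Ico s r ∧ (s : UnitAddCircle) ∈ digitPoints b ∧
      ∀ u ∈ Set.Ico s r, circleDigit b u = circleDigit b t := by
  have hd := circleDigit_mem_Ico hb t
  obtain ⟨k, hk⟩ := (circleDigit_coe_eq_iff hd t).1 rfl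
  exact ⟨_, _, hk,
    Finset.mem_image.2 ⟨_, hd, (unitAddCircle_coe_eq_coe_iff.2 ⟨k, rfl⟩).symm⟩,
    fun u hu ↦ (circleDigit_coe_eq_iff hd u).2 ⟨k, hu⟩⟩

-- The arc of the digit `d` has length `log_b (1 + 1 / d) ≤ log_b 2`, at most half the circle when
-- `4 ≤ b`.
lemma exists_mem_Ico_of_circleDigit_eq (hb : 4 ≤ b) {s t : ℝ}
    (hs : (s : UnitAddCircle) ∈ digitPoints b) (hst : circleDigit b t = circleDigit b s) :
    ∃ k : ℤ, t ∈ Set.Ico (s + k) (s + k + 1 / 2) := by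
  have hb' : (4 : ℝ) ≤ b := by exact_mod_cast hb
  obtain ⟨d, hd, hds⟩ := Finset.mem_image.1 hs
  have hd₁ : (1 : ℝ) ≤ d := by exact_mod_cast (Finset.mem_Ico.1 hd).1
  have arc_le : Real.logb b (d + 1) ≤ Real.logb b d + 1 / 2 := by
    have sqrt_le : (2 : ℝ) ≤ (b : ℝ) ^ (1 / 2 : ℝ) := by
      rw [← Real.sqrt_eq_rpow]
      exact Real.le_sqrt_of_sq_le (by linarith)
    rw [← sub_le_iff_le_add', ← Real.logb_div (by positivity) (by positivity),
      Real.logb_le_iff_le_rpow (by linarith) (by positivity), div_le_iff₀ (by positivity)]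
    nlinarith
  have arc_pos : Real.logb b d < Real.logb b (d + 1) :=
    Real.logb_lt_logb (by linarith) (by linarith) (by linarith)
  have digit_s : circleDigit b (s : UnitAddCircle) = d := by
    rw [← hds]
    exact (circleDigit_coe_eq_iff hd _).2
      ⟨0, by simpa only [Int.cast_zero, add_zero, Set.left_mem_Ico] using arc_pos⟩
  obtain ⟨k, hk⟩ := (circleDigit_coe_eq_iff hd t).1 (hst.trans digit_s)
  obtain ⟨l, hl⟩ := unitAddCircle_coe_eq_coe_iff.1 hds
  refine ⟨l + k, ?_, ?_⟩ <;> push_cast <;> linarith [hk.1, hk.2]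

end CircleDigit

section CircleWord

variable {b n : ℕ} {α : UnitAddCircle}

/-- The coding of length `n` of the orbit of `θ` under the rotation by `α`, each point being
recorded by its digit in base `b`. -/
noncomputable def circleWord (b : ℕ) (α : UnitAddCircle) (n : ℕ) (θ : UnitAddCircle) :
    Fin n → ℕ :=
  fun i ↦ circleDigit b (θ + (i : ℕ) • α)

/-- The points of the circle that the rotation by `α` brings to a digit point in fewer than `n`
steps: the left endpoints of the arcs on which `circleWord b α n` is constant. -/
noncomputable def breakpoints (b : ℕ) (α : UnitAddCircle) (n : ℕ) : Finset UnitAddCircle :=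
  (Finset.range n).biUnion fun i ↦ (digitPoints b).image (· - i • α)

lemma mem_breakpoints {θ : UnitAddCircle} :
    θ ∈ breakpoints b α n ↔ ∃ i < n, θ + i • α ∈ digitPoints b := by
  simp only [breakpoints, Finset.mem_biUnion, Finset.mem_range, Finset.mem_image, sub_eq_iff_eq_add,
    exists_eq_right]

lemma exists_arc_circleWord_eq (hb : 1 < b) (hn : 1 ≤ n) (t : ℝ) :
    ∃ s r : ℝ, t ∈ Set.Ico s r ∧ (s : UnitAddCircle) ∈ breakpoints b α n ∧
      ∀ u ∈ Set.Ico s r, circleWord b α n u = circleWord b α n t := by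
  have digit_arc (i : ℕ) : ∃ s r : ℝ, t ∈ Set.Ico s r ∧ s + i • α ∈ digitPoints b ∧
      ∀ u ∈ Set.Ico s r, circleDigit b (u + i • α) = circleDigit b (t + i • α) := by
    obtain ⟨c, hc⟩ := QuotientAddGroup.mk_surjective (i • α)
    obtain ⟨s, r, ht, hs, hu⟩ := exists_arc_circleDigit_eq hb (t + c)
    refine ⟨s - c, r - c, ⟨by linarith [ht.1], by linarith [ht.2]⟩, ?_, fun u hu' ↦ ?_⟩
    · rwa [← hc, AddCircle.coe_sub, sub_add_cancel]
    · simpa only [← hc, AddCircle.coe_add] using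
        hu (u + c) ⟨by linarith [hu'.1], by linarith [hu'.2]⟩
  choose s r ht hs hu using digit_arc
  have : Nonempty (Fin n) := ⟨⟨0, hn⟩⟩
  obtain ⟨i, hi⟩ := Finite.exists_max fun i : Fin n ↦ s i
  obtain ⟨j, hj⟩ := Finite.exists_min fun j : Fin n ↦ r j
  exact ⟨s i, r j, ⟨(ht i).1, (ht j).2⟩, mem_breakpoints.2 ⟨i, i.2, hs i⟩,
    fun u hu' ↦ funext fun l ↦ hu l u ⟨(hi l).trans hu'.1, hu'.2.trans_le (hj l)⟩⟩

lemma exists_mem_Ico_of_circleWord_eq (hb : 4 ≤ b) {s t : ℝ}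
    (hs : (s : UnitAddCircle) ∈ breakpoints b α n)
    (hst : circleWord b α n t = circleWord b α n s) :
    ∃ k : ℤ, t ∈ Set.Ico (s + k) (s + k + 1 / 2) := by
  obtain ⟨i, hi, hs⟩ := mem_breakpoints.1 hs
  have hst : circleDigit b (t + i • α) = circleDigit b (s + i • α) := congrFun hst ⟨i, hi⟩
  obtain ⟨c, hc⟩ := QuotientAddGroup.mk_surjective (i • α)
  rw [← hc] at hs hst
  obtain ⟨k, hk⟩ := exists_mem_Ico_of_circleDigit_eq hb (s := s + c) (t := t + c) hs hst
  exact ⟨k, by linarith [hk.1], by linarith [hk.2]⟩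

lemma circleWord_injOn (hb : 4 ≤ b) :
    Set.InjOn (circleWord b α n) (breakpoints b α n) := by
  intro θ hθ η hη h
  obtain ⟨s, rfl⟩ := QuotientAddGroup.mk_surjective θ
  obtain ⟨t, rfl⟩ := QuotientAddGroup.mk_surjective η
  obtain ⟨k, hk⟩ := exists_mem_Ico_of_circleWord_eq hb hθ h.symm
  obtain ⟨l, hl⟩ := exists_mem_Ico_of_circleWord_eq hb hη h
  have upper : ((k + l : ℤ) : ℝ) < 1 := by push_cast; linarith [hk.1, hl.1]
  have lower : (-1 : ℝ) < ((k + l : ℤ) : ℝ) := by push_cast; linarith [hk.2, hl.2]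
  norm_cast at upper lower
  have sum_eq : (k : ℝ) + l = 0 := by exact_mod_cast (by omega : k + l = 0)
  exact unitAddCircle_coe_eq_coe_iff.2 ⟨l, by linarith [hk.1, hl.1]⟩

lemma range_circleWord (hb : 1 < b) (hn : 1 ≤ n) :
    Set.range (circleWord b α n) = circleWord b α n '' breakpoints b α n := by
  refine (Set.image_subset_range _ _).antisymm' ?_
  rintro _ ⟨θ, rfl⟩
  obtain ⟨t, rfl⟩ := QuotientAddGroup.mk_surjective θ
  obtain ⟨s, r, ht, hs, hu⟩ := exists_arc_circleWord_eq hb hn t (α := α)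
  exact ⟨s, hs, hu s ⟨le_rfl, ht.1.trans_lt ht.2⟩⟩

lemma range_circleWord_eq_image_nsmul (hb : 1 < b) (hn : 1 ≤ n) (hα : addOrderOf α = 0) :
    Set.range (circleWord b α n) = (fun m : ℕ ↦ circleWord b α n (m • α)) '' Set.Ici 1 := by
  refine Set.Subset.antisymm ?_ (Set.image_subset_iff.2 fun m _ ↦ Set.mem_range_self _)
  rintro _ ⟨θ, rfl⟩
  obtain ⟨t, rfl⟩ := QuotientAddGroup.mk_surjective θ
  obtain ⟨s, r, ht, -, hu⟩ := exists_arc_circleWord_eq hb hn t (α := α)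
  have arc_open : IsOpen ((↑) '' Set.Ioo t r : Set UnitAddCircle) :=
    QuotientAddGroup.isOpenMap_coe _ isOpen_Ioo
  obtain ⟨m, hm, u, hut, hum⟩ :=
    exists_pos_nsmul_mem_of_isOpen (AddCircle.denseRange_zsmul_iff.2 hα) arc_open
      ((Set.nonempty_Ioo.2 ht.2).image _)
  refine ⟨m, hm, ?_⟩
  simp only [← hum]
  exact hu u ⟨ht.1.trans hut.1.le, hut.2⟩

end CircleWord

section BlockComplexity

variable {a : ℝ} {b n : ℕ}

lemma blockComplexity_eq_ncard (hb : 1 < b) (ha : 0 < a) :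
    blockComplexity a b n =
      ((fun m : ℕ ↦ circleWord b (circleLog b a) n (m • circleLog b a)) '' Set.Ici 1).ncard := by
  have digit_pow (m i : ℕ) : leadingDigit b (a ^ (m + i)) =
      circleDigit b (m • circleLog b a + i • circleLog b a) := by
    rw [leadingDigit_eq_circleDigit hb (by positivity), circleLog_pow, add_nsmul]
  rw [blockComplexity]
  congr 1
  ext w
  simp only [digit_pow, Set.mem_image, Set.mem_Ici, funext_iff, circleWord, eq_comm,
    Set.mem_ofPred_eq]

lemma blockComplexity_eq_card_breakpoints (hb : 4 ≤ b) (ha : 0 < a)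
    (hα : addOrderOf (circleLog b a) = 0) (hn : 1 ≤ n) :
    blockComplexity a b n = (breakpoints b (circleLog b a) n).card := by
  have hb₁ : 1 < b := by omega
  rw [blockComplexity_eq_ncard hb₁ ha, ← range_circleWord_eq_image_nsmul hb₁ hn hα,
    range_circleWord hb₁ hn, (circleWord_injOn hb).ncard_image, Set.ncard_coe_finset]

lemma blockComplexity_le_addOrderOf (hb : 1 < b) (ha : 0 < a)
    (hα : addOrderOf (circleLog b a) ≠ 0) :
    blockComplexity a b n ≤ addOrderOf (circleLog b a) := by
  set α := circleLog b a
  have orbit_finite : (AddSubgroup.zmultiples α : Set UnitAddCircle).Finite :=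
    finite_zmultiples.2 (addOrderOf_pos_iff.1 (Nat.pos_of_ne_zero hα))
  have words_subset : (fun m : ℕ ↦ circleWord b α n (m • α)) '' Set.Ici 1 ⊆
      circleWord b α n '' AddSubgroup.zmultiples α := by
    rintro _ ⟨m, -, rfl⟩
    exact Set.mem_image_of_mem _ (AddSubgroup.nsmul_mem_zmultiples α m)
  calc blockComplexity a b n
      = ((fun m : ℕ ↦ circleWord b α n (m • α)) '' Set.Ici 1).ncard :=
        blockComplexity_eq_ncard hb ha
    _ ≤ (circleWord b α n '' AddSubgroup.zmultiples α).ncard :=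
        Set.ncard_le_ncard words_subset (orbit_finite.image _)
    _ ≤ (AddSubgroup.zmultiples α : Set UnitAddCircle).ncard := Set.ncard_image_le orbit_finite
    _ = addOrderOf α := Nat.card_zmultiples α

end BlockComplexity

section SecondDifference

variable {b : ℕ} {α : UnitAddCircle}

lemma breakpoints_mono : Monotone (breakpoints b α) := fun _ _ h ↦
  Finset.biUnion_subset_biUnion_of_subset_left _ (Finset.range_mono h)

lemma mem_image_sub_breakpoints {n : ℕ} {θ : UnitAddCircle} :
    θ ∈ (breakpoints b α n).image (· - α) ↔ ∃ i < n, θ + (i + 1) • α ∈ digitPoints b := by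
  simp only [Finset.mem_image, sub_eq_iff_eq_add, exists_eq_right, mem_breakpoints, succ_nsmul',
    add_assoc]

lemma breakpoints_add_two (n : ℕ) :
    breakpoints b α (n + 2) =
      breakpoints b α (n + 1) ∪ (breakpoints b α (n + 1)).image (· - α) := by
  ext θ
  rw [Finset.mem_union, mem_image_sub_breakpoints, mem_breakpoints, mem_breakpoints]
  constructor
  · rintro ⟨_ | i, hi, h⟩
    · exact .inl ⟨0, by omega, h⟩
    · exact .inr ⟨i, by omega, h⟩
  · rintro (⟨i, hi, h⟩ | ⟨i, hi, h⟩)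
    · exact ⟨i, by omega, h⟩
    · exact ⟨i + 1, by omega, h⟩

-- The sets `breakpoints b α (n + 1)` and `breakpoints b α (n + 1) - α` share all of
-- `breakpoints b α n - α` and, in addition, the returning point `θ`.
lemma card_breakpoints_add_two_add_lt {n : ℕ} {θ : UnitAddCircle} (h₀ : θ ∈ digitPoints b)
    (hn : θ + (n + 1) • α ∈ digitPoints b)
    (hlt : ∀ i < n, θ + (i + 1) • α ∉ digitPoints b) :
    (breakpoints b α (n + 2)).card + (breakpoints b α n).card <
      2 * (breakpoints b α (n + 1)).card := by
  rw [breakpoints_add_two]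
  refine card_union_image_add_card_lt sub_left_injective (breakpoints_mono n.le_succ) ?_
    (mem_breakpoints.2 ⟨0, n.succ_pos, by rwa [zero_nsmul, add_zero]⟩)
    (mem_image_sub_breakpoints.2 ⟨n, n.lt_succ_self, hn⟩) ?_
  · intro η hη
    obtain ⟨i, hi, h⟩ := mem_image_sub_breakpoints.1 hη
    exact mem_breakpoints.2 ⟨i + 1, by omega, h⟩
  · rw [mem_image_sub_breakpoints]
    rintro ⟨i, hi, h⟩
    exact hlt i hi h

end SecondDifference

section SquareDivisor

variable {a b : ℕ}

-- With `b = a ^ 2 * m`, the digit point of `(a + 1) * m` is carried in one step to `(a + 1) / a`,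
-- strictly between the digits `1` and `2`, and in two steps to the digit point of `a + 1`.
lemma exists_mem_digitPoints_of_sq_dvd (ha : 1 < a) (hb : b ≠ 0) (hab : a ^ 2 ∣ b) :
    ∃ θ ∈ digitPoints b, θ + circleLog b a ∉ digitPoints b ∧
      θ + 2 • circleLog b a ∈ digitPoints b := by
  obtain ⟨m, hm⟩ := hab
  have hm₀ : 0 < m := Nat.pos_of_ne_zero fun h ↦ hb (by rw [hm, h, mul_zero])
  have succ_lt_sq : a + 1 < a ^ 2 := by nlinarith
  have hmb : (a + 1) * m < b := hm ▸ Nat.mul_lt_mul_of_pos_right succ_lt_sq hm₀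
  have succ_lt : a + 1 < b := (Nat.le_mul_of_pos_right _ hm₀).trans_lt hmb
  have hb₁ : 1 < b := by omega
  have ha₀ : (a : ℝ) ≠ 0 := by positivity
  have one_step : circleLog b ((a + 1) * m : ℕ) + circleLog b a = circleLog b ((a + 1) / a) := by
    rw [← circleLog_mul (by positivity) ha₀, ← add_zero (circleLog b ((a + 1) / a)),
      ← circleLog_base hb₁, ← circleLog_mul (by positivity) (by positivity), hm]
    congr 1
    push_cast
    field_simp
  have two_steps : circleLog b ((a + 1) * m : ℕ) + 2 • circleLog b a = circleLog b (a + 1 : ℕ) := by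
    rw [two_nsmul, ← add_assoc, one_step, ← circleLog_mul (by positivity) ha₀,
      div_mul_cancel₀ _ ha₀, Nat.cast_succ]
  refine ⟨_, Finset.mem_image_of_mem _ (Finset.mem_Ico.2 ⟨Nat.mul_pos a.succ_pos hm₀, hmb⟩), ?_, ?_⟩
  · rw [one_step]
    have succ_lt_real : (a : ℝ) + 1 < b := by exact_mod_cast succ_lt
    have quotient_mem : ((a : ℝ) + 1) / a ∈ Set.Ico (1 : ℝ) b :=
      ⟨by rw [le_div_iff₀ (by positivity)]; linarith,
        (div_le_self (by positivity) (by exact_mod_cast ha.le)).trans_lt succ_lt_real⟩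
    rw [circleLog_mem_digitPoints_iff hb₁ quotient_mem]
    rintro ⟨d, hd_eq⟩
    rw [eq_div_iff ha₀] at hd_eq
    have mul_eq : d * a = a + 1 := by exact_mod_cast hd_eq
    have dvd_one : a ∣ 1 := (Nat.dvd_add_right dvd_rfl).1 (mul_eq ▸ dvd_mul_left a d)
    exact ha.ne' (Nat.dvd_one.1 dvd_one)
  · rw [two_steps]
    exact Finset.mem_image_of_mem _ (Finset.mem_Ico.2 ⟨a.succ_pos, succ_lt⟩)

theorem not_exists_linear_blockComplexity_of_sq_dvd (ha : 1 < a) (hb : b ≠ 0) (hab : a ^ 2 ∣ b) :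
    ¬ ∃ c d : ℤ, 1 ≤ c ∧ ∀ n : ℕ, 1 ≤ n → (blockComplexity (a : ℝ) b n : ℤ) = c * n + d := by
  rintro ⟨c, d, hc, hlin⟩
  have ha₀ : (0 : ℝ) < a := by exact_mod_cast zero_lt_one.trans ha
  have hb₄ : 4 ≤ b := (Nat.pow_le_pow_left ha 2).trans (Nat.le_of_dvd (Nat.pos_of_ne_zero hb) hab)
  by_cases hα : addOrderOf (circleLog b a) = 0
  · obtain ⟨θ, h₀, h₁, h₂⟩ := exists_mem_digitPoints_of_sq_dvd ha hb hab
    have concave := card_breakpoints_add_two_add_lt (n := 1) h₀ h₂ (by simpa using h₁)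
    simp only [← blockComplexity_eq_card_breakpoints hb₄ ha₀ hα, le_refl, Nat.reduceLeDiff,
      Nat.reduceAdd] at concave
    have lin₁ := hlin 1 (by omega)
    have lin₂ := hlin 2 (by omega)
    have lin₃ := hlin 3 (by omega)
    push_cast at lin₁ lin₂ lin₃
    omega
  · set N := addOrderOf (circleLog b a)
    have bounded : (blockComplexity (a : ℝ) b (N + d.natAbs + 1) : ℤ) ≤ N := by
      exact_mod_cast blockComplexity_le_addOrderOf (by omega) ha₀ hα
    rw [hlin _ (by omega)] at bounded
    push_cast at bounded
    nlinarith [neg_abs_le d, abs_nonneg d]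

end SquareDivisor

/-- For every non-squarefree integer `b ≥ 5` there is an integer `a`
with `1 < a < b` such that `p_{a,b}(n)` is not of the form `c·n + d` (for all `n ≥ 1`)
with integers `c ≥ 1` and `d`. -/
theorem exists_nonlinear_blockComplexity (b : ℕ) (hb : 5 ≤ b) (hnsf : ¬ Squarefree b) :
    ∃ a : ℕ, 1 < a ∧ a < b ∧
      ¬ ∃ c d : ℤ, 1 ≤ c ∧ ∀ n : ℕ, 1 ≤ n →
        (blockComplexity (a : ℝ) b n : ℤ) = c * n + d := by
  rw [Squarefree] at hnsf
  push Not at hnsf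
  obtain ⟨a, hab, ha⟩ := hnsf
  have hb₀ : b ≠ 0 := by omega
  have ha₁ : 1 < a := by
    have : a ≠ 1 := fun h ↦ ha (Nat.isUnit_iff.2 h)
    have : a ≠ 0 := by rintro rfl; exact hb₀ (by simpa using hab)
    omega
  have ha_lt : a < b := by nlinarith [Nat.le_of_dvd (Nat.pos_of_ne_zero hb₀) hab]
  exact ⟨a, ha₁, ha_lt, not_exists_linear_blockComplexity_of_sq_dvd ha₁ hb₀ (sq a ▸ hab)⟩
end
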